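/- Let R be a noetherian regular ring of prime characteristic p, and let F denote the Peskine–Szpiro (Frobenius) functor F(M) = R^{(1)} ⊗_R M, where R^{(1)} is R with right R-action r'·r = r^p r'. Then for every g ∈ R, F(R·(1/g)) ≅ R·(1/g^p) as R-modules, where R·(1/g^n) denotes the cyclic R-submodule of the localization R_g generated by 1/g^n. -/

import Mathlib

open IsLocalRing

/-- A noetherian local ring is regular if its Krull dimension equals the dimension of its
cotangent space over the residue field. -/
def IsRegularLocalRingStmt (A : Type u) [CommRing A] [IsLocalRing A] : Prop :=
  ringKrullDim A = (Module.finrank (ResidueField A) (CotangentSpace A) : WithBot (WithTop ℕ))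

/-- A commutative ring is regular if it is noetherian and all of its localizations at
primes are regular local rings. -/
def IsRegularRingStmt (R : Type u) [CommRing R] : Prop :=
  IsNoetherianRing R ∧
    ∀ (P : Ideal R) [P.IsPrime], IsRegularLocalRingStmt (Localization.AtPrime P)

/-!
The cyclic module `R·u` is `R ⧸ ann u`, and extension of scalars along a ring homomorphism `σ` sends
`R ⧸ I` to the quotient by the ideal generated by `σ(I)`. For a unit `u` of a localization `R → S`,
both `u` and `u ^ p` have annihilator `K = ker (R → S)`, so the claim is that the `p`-th powers of
elements of `K` generate `K`. Kunz's flatness theorem would give this; here it comes from the fact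
that the localizations of `R` at primes are domains. If `a * b = 0`, then at each prime `a` or `b`
vanishes, so `ann a` and `ann b` are comaximal, and some `e ∈ ann a` satisfies `b = e * b`. Hence
each `b ∈ K` is `e * b = e ^ p * b` with `e ∈ K`.

That a regular local ring `A` with maximal ideal `𝔪` is a domain goes by induction on the number of
generators of `𝔪`. By prime avoidance some `x ∈ 𝔪 \ 𝔪 ^ 2` lies in no minimal prime; `A ⧸ (x)` is
regular of smaller dimension, so `(x)` is prime. A minimal prime `Q ⊆ (x)` then satisfies
`Q = x * Q` since `x ∉ Q`, and Nakayama's lemma gives `Q = 0`.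
-/

open CategoryTheory

theorem exists_ncard_add_one_eq_finrank_and_span_insert_eq_top {K V : Type*} [DivisionRing K]
    [AddCommGroup V] [Module K V] [FiniteDimensional K V] {v : V} (hv : v ≠ 0) :
    ∃ t : Set V, t.Finite ∧ t.ncard + 1 = Module.finrank K V ∧
      Submodule.span K (insert v t) = ⊤ := by
  have hindep : LinearIndepOn K id ({v} : Set V) := LinearIndepOn.singleton hv
  set b := hindep.extend (Set.subset_univ _)
  have hvb : v ∈ b := hindep.subset_extend _ rfl
  have hb : b.Finite := (hindep.linearIndepOn_extend (Set.subset_univ _)).setFinite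
  refine ⟨b \ {v}, hb.subset Set.sdiff_subset, ?_, ?_⟩
  · rw [Set.ncard_sdiff_singleton_add_one hvb hb,
      Module.finrank_eq_nat_card_basis (Module.Basis.extend hindep)]
    rfl
  · rw [Set.insert_sdiff_singleton, Set.insert_eq_of_mem hvb, hindep.span_extend_eq_span,
      Submodule.span_univ]

theorem exists_ncard_add_one_eq_spanFinrank_and_span_insert_eq_maximalIdeal {A : Type*}
    [CommRing A] [IsLocalRing A] [IsNoetherianRing A] {x : A} (hx : x ∈ maximalIdeal A)
    (hx2 : x ∉ maximalIdeal A ^ 2) :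
    ∃ s : Set A, s.Finite ∧ s.ncard + 1 = (maximalIdeal A).spanFinrank ∧
      Ideal.span (insert x s) = maximalIdeal A := by
  have hx_ne : (maximalIdeal A).toCotangent ⟨x, hx⟩ ≠ 0 := by
    rwa [Ne, Ideal.toCotangent_eq_zero]
  obtain ⟨t, ht, htcard, htspan⟩ :=
    exists_ncard_add_one_eq_finrank_and_span_insert_eq_top (K := ResidueField A) hx_ne
  obtain ⟨lift, hlift⟩ := (maximalIdeal A).toCotangent_surjective.hasRightInverse
  have himage : (maximalIdeal A).toCotangent '' insert ⟨x, hx⟩ (lift '' t) =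
      insert ((maximalIdeal A).toCotangent ⟨x, hx⟩) t := by
    rw [Set.image_insert_eq, hlift.image_image]
  have hspan : Submodule.span A (insert ⟨x, hx⟩ (lift '' t)) = ⊤ := by
    rw [← CotangentSpace.span_image_eq_top_iff, himage, htspan]
  refine ⟨(↑) '' (lift '' t), (ht.image _).image _, ?_, ?_⟩
  · rw [spanFinrank_maximalIdeal_eq_finrank_cotangentSpace, ← htcard,
      Set.ncard_image_of_injective _ Subtype.val_injective,
      Set.ncard_image_of_injective _ hlift.injective]
  · have := congrArg (Submodule.map (maximalIdeal A).subtype) hspan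
    rwa [Submodule.map_span, Submodule.map_top, Submodule.range_subtype, Set.image_insert_eq]
      at this

theorem spanFinrank_maximalIdeal_add_one_le_of_surjective {A B : Type*} [CommRing A]
    [IsLocalRing A] [IsNoetherianRing A] [CommRing B] [IsLocalRing B] {f : A →+* B}
    (hf : Function.Surjective f) {x : A} (hx : x ∈ maximalIdeal A) (hx2 : x ∉ maximalIdeal A ^ 2)
    (hfx : f x = 0) :
    (maximalIdeal B).spanFinrank + 1 ≤ (maximalIdeal A).spanFinrank := by
  obtain ⟨s, hs, hscard, hspan⟩ :=
    exists_ncard_add_one_eq_spanFinrank_and_span_insert_eq_maximalIdeal hx hx2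
  have hB : maximalIdeal B = Submodule.span B (f '' s) := by
    rw [← map_maximalIdeal_of_surjective f hf, ← hspan, Ideal.map_span, Set.image_insert_eq, hfx]
    exact Submodule.span_insert_zero
  calc (maximalIdeal B).spanFinrank + 1
      ≤ (f '' s).ncard + 1 :=
        Nat.add_le_add_right
          (hB ▸ Submodule.spanFinrank_span_le_ncard_of_finite (hs.image f)) 1
    _ ≤ s.ncard + 1 := Nat.add_le_add_right (Set.ncard_image_le hs) 1
    _ = (maximalIdeal A).spanFinrank := hscard

theorem isRegularLocalRing_quotient_span_singleton {A : Type*} [CommRing A]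
    [IsRegularLocalRing A] {x : A} (hx : x ∈ maximalIdeal A) (hx2 : x ∉ maximalIdeal A ^ 2) :
    IsRegularLocalRing (A ⧸ Ideal.span {x}) := by
  have : Nontrivial (A ⧸ Ideal.span {x}) :=
    Ideal.Quotient.nontrivial_iff.2 fun h =>
      (maximalIdeal.isMaximal A).ne_top
        (top_le_iff.1 (h ▸ (Ideal.span_singleton_le_iff_mem _).2 hx))
  have : IsLocalRing (A ⧸ Ideal.span {x}) :=
    .of_surjective' (Ideal.Quotient.mk _) Ideal.Quotient.mk_surjective
  have hrank := spanFinrank_maximalIdeal_add_one_le_of_surjective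
    (Ideal.Quotient.mk_surjective (I := Ideal.span {x})) hx hx2
    (Ideal.Quotient.mk_singleton_self x)
  refine .of_spanFinrank_maximalIdeal_le _ ?_
  have hdim : ((maximalIdeal (A ⧸ Ideal.span {x})).spanFinrank : WithBot ℕ∞) + 1 ≤
      ringKrullDim (A ⧸ Ideal.span {x}) + 1 :=
    calc ((maximalIdeal (A ⧸ Ideal.span {x})).spanFinrank : WithBot ℕ∞) + 1
        ≤ (maximalIdeal A).spanFinrank := by exact_mod_cast hrank
      _ = (maximalIdeal A).height := by
        rw [IsRegularLocalRing.spanFinrank_maximalIdeal, maximalIdeal_height_eq_ringKrullDim]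
      _ ≤ ringKrullDim (A ⧸ Ideal.span {x}) + 1 := Ideal.height_le_ringKrullDim_quotient_add_one hx
  exact ENat.WithBot.add_le_add_one_right_iff.1 hdim

theorem exists_mem_maximalIdeal_notMem_sq_notMem_minimalPrimes {A : Type*} [CommRing A]
    [IsLocalRing A] [IsNoetherianRing A] (hA : ringKrullDim A ≠ 0) :
    ∃ x ∈ maximalIdeal A, x ∉ maximalIdeal A ^ 2 ∧ ∀ Q ∈ minimalPrimes A, x ∉ Q := by
  have hmin : maximalIdeal A ∉ minimalPrimes A := fun h => by
    rw [← maximalIdeal_height_eq_ringKrullDim, Ideal.height_eq_zero_iff.2 h] at hA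
    exact hA rfl
  have hsq : ¬ maximalIdeal A ≤ maximalIdeal A ^ 2 := fun h => by
    have hbot : maximalIdeal A = ⊥ :=
      Submodule.eq_bot_of_le_smul_of_le_jacobson_bot (maximalIdeal A) _
        (IsNoetherian.noetherian _) (by rwa [smul_eq_mul, ← sq])
        (jacobson_eq_maximalIdeal _ bot_ne_top).ge
    exact hA (ringKrullDim_eq_zero_of_isField (isField_iff_maximalIdeal_eq.2 hbot))
  have hfin : (insert (maximalIdeal A ^ 2) (minimalPrimes A)).Finite :=
    (minimalPrimes.finite_of_isNoetherianRing A).insert _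
  have havoid : ¬ (maximalIdeal A : Set A) ⊆
      ⋃ I ∈ insert (maximalIdeal A ^ 2) (minimalPrimes A), I := fun hU => by
    -- Prime avoidance tolerates the one ideal `maximalIdeal A ^ 2` that need not be prime.
    obtain ⟨Q, rfl | hQ, hle⟩ := (Ideal.subset_union_prime_finite hfin (f := id)
      (maximalIdeal A ^ 2) (maximalIdeal A ^ 2)
      fun I hI hne _ => (Set.mem_of_mem_insert_of_ne hI hne).1.1).1 hU
    · exact hsq hle
    · have hQ_eq : maximalIdeal A = Q := le_antisymm hle (le_maximalIdeal hQ.1.1.ne_top)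
      exact hmin (hQ_eq ▸ hQ)
  obtain ⟨x, hx, hxU⟩ := Set.not_subset.1 havoid
  simp only [Set.mem_iUnion, not_exists] at hxU
  exact ⟨x, hx, hxU _ (Set.mem_insert _ _), fun Q hQ => hxU Q (Set.mem_insert_of_mem _ hQ)⟩

theorem isDomain_of_isPrime_span_singleton {A : Type*} [CommRing A] [IsNoetherianRing A] {x : A}
    (hxj : x ∈ Ideal.jacobson (⊥ : Ideal A)) (hx : (Ideal.span {x}).IsPrime)
    (hxmin : ∀ Q ∈ minimalPrimes A, x ∉ Q) : IsDomain A := by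
  obtain ⟨Q, hQ, hQx⟩ := Ideal.exists_minimalPrimes_le (bot_le : ⊥ ≤ Ideal.span {x})
  have hQ_prime : Q.IsPrime := hQ.1.1
  have hQ_le : Q ≤ Ideal.span {x} • Q := fun q hq => by
    obtain ⟨a, rfl⟩ := Ideal.mem_span_singleton.1 (hQx hq)
    exact Submodule.smul_mem_smul (Ideal.mem_span_singleton_self x)
      ((hQ_prime.mem_or_mem hq).resolve_left (hxmin Q hQ))
  have hQ_bot : Q = ⊥ :=
    Submodule.eq_bot_of_le_smul_of_le_jacobson_bot _ _ (IsNoetherian.noetherian _) hQ_le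
      ((Ideal.span_singleton_le_iff_mem _).2 hxj)
  rw [hQ_bot] at hQ_prime
  exact .of_bot_isPrime A

theorem isDomain_of_isRegularLocalRing (A : Type*) [CommRing A] [IsRegularLocalRing A] :
    IsDomain A := by
  induction hn : (maximalIdeal A).spanFinrank using Nat.strong_induction_on generalizing A with
  | _ n ih =>
    by_cases hdim : ringKrullDim A = 0
    · have hfield := (IsRegularLocalRing.iff_finrank_cotangentSpace A).1 ‹_›
      rw [hdim, Nat.cast_eq_zero, finrank_cotangentSpace_eq_zero_iff] at hfield
      exact hfield.isDomain
    · obtain ⟨x, hx, hx2, hxmin⟩ := exists_mem_maximalIdeal_notMem_sq_notMem_minimalPrimes hdim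
      have hreg := isRegularLocalRing_quotient_span_singleton hx hx2
      have hrank := spanFinrank_maximalIdeal_add_one_le_of_surjective
        (Ideal.Quotient.mk_surjective (I := Ideal.span {x})) hx hx2
        (Ideal.Quotient.mk_singleton_self x)
      have hdom := ih _ (hn ▸ hrank) (A ⧸ Ideal.span {x}) rfl
      exact isDomain_of_isPrime_span_singleton
        (jacobson_eq_maximalIdeal (⊥ : Ideal A) bot_ne_top ▸ hx)
        ((Ideal.Quotient.isDomain_iff_prime _).1 hdom) hxmin

theorem IsRegularRingStmt.isRegularRing {R : Type*} [CommRing R] (hR : IsRegularRingStmt R) :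
    IsRegularRing R := by
  have := hR.1
  refine isRegularRing_iff.2 fun P _ => ?_
  have := IsLocalization.isNoetherianRing P.primeCompl (Localization.AtPrime P) hR.1
  exact (IsRegularLocalRing.iff_finrank_cotangentSpace _).2 (hR.2 P).symm

section LocallyDomain

variable {R : Type*} [CommRing R]

theorem exists_mul_eq_zero_and_mul_eq_self_of_isDomain_localization
    (hR : ∀ (P : Ideal R) [P.IsPrime], IsDomain (Localization.AtPrime P)) {a b : R}
    (hab : a * b = 0) : ∃ e, e * a = 0 ∧ e * b = b := by
  have hcomax : Ideal.torsionOf R R a ⊔ Ideal.torsionOf R R b = ⊤ := by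
    by_contra hne
    obtain ⟨P, hP, hle⟩ := Ideal.exists_le_maximal _ hne
    have := hR P
    have hne_zero {c : R} (hc : Ideal.torsionOf R R c ≤ P) :
        algebraMap R (Localization.AtPrime P) c ≠ 0 := fun h => by
      obtain ⟨s, hs⟩ := (IsLocalization.map_eq_zero_iff P.primeCompl _ _).1 h
      exact s.2 (hc hs)
    exact mul_ne_zero (hne_zero (le_sup_left.trans hle)) (hne_zero (le_sup_right.trans hle))
      (by rw [← map_mul, hab, map_zero])
  obtain ⟨e, he, c, hc, hec⟩ := Submodule.mem_sup.1 (hcomax ▸ Submodule.mem_top (x := (1 : R)))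
  rw [Ideal.mem_torsionOf_iff, smul_eq_mul] at he hc
  exact ⟨e, he, by linear_combination b * hec - hc⟩

theorem map_frobenius_ker_algebraMap_of_isDomain_localization (p : ℕ) [ExpChar R p]
    (hR : ∀ (P : Ideal R) [P.IsPrime], IsDomain (Localization.AtPrime P)) (M : Submonoid R)
    (S : Type*) [CommRing S] [Algebra R S] [IsLocalization M S] :
    (RingHom.ker (algebraMap R S)).map (frobenius R p) = RingHom.ker (algebraMap R S) := by
  refine le_antisymm (Ideal.map_le_iff_le_comap.2 fun r hr =>
    Ideal.pow_mem_of_mem _ hr p (expChar_pos R p)) fun r hr => ?_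
  obtain ⟨m, hm⟩ := (IsLocalization.map_eq_zero_iff M S r).1 hr
  obtain ⟨e, hem, her⟩ := exists_mul_eq_zero_and_mul_eq_self_of_isDomain_localization hR hm
  have he : e ∈ RingHom.ker (algebraMap R S) :=
    (IsLocalization.map_eq_zero_iff M S e).2 ⟨m, by rwa [mul_comm]⟩
  have hpow : e ^ p * r = r := by
    rw [← mul_left_iterate_apply]
    exact (show Function.IsFixedPt (e * ·) r from her).iterate p
  rw [← hpow]
  exact Ideal.mul_mem_right r _ (Ideal.mem_map_of_mem (frobenius R p) he)

theorem torsionOf_eq_ker_algebraMap_of_isUnit {S : Type*} [CommRing S] [Algebra R S] {u : S}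
    (hu : IsUnit u) : Ideal.torsionOf R S u = RingHom.ker (algebraMap R S) := by
  ext r
  rw [Ideal.mem_torsionOf_iff, Algebra.smul_def, hu.mul_left_eq_zero, RingHom.mem_ker]

end LocallyDomain

theorem nonempty_extendScalars_span_singleton_iso {R : Type u₁} {S : Type u₂} [CommRing R]
    [CommRing S] (σ : R →+* S) {M : Type v} [AddCommGroup M] [Module R M] {N : Type (max u₂ v)}
    [AddCommGroup N] [Module S N] {x : M} {y : N}
    (hxy : (Ideal.torsionOf R M x).map σ = Ideal.torsionOf S N y) :
    Nonempty ((ModuleCat.extendScalars σ).obj (ModuleCat.of R (Submodule.span R {x})) ≅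
      ModuleCat.of S (Submodule.span S {y})) := by
  let := σ.toAlgebra
  let e : TensorProduct R S (Submodule.span R {x}) ≃ₗ[S] Submodule.span S {y} :=
    (Ideal.quotTorsionOfEquivSpanSingleton R M x).symm.baseChange R S _ _ ≪≫ₗ
      (Algebra.TensorProduct.quotIdealMapEquivTensorQuot S
        (Ideal.torsionOf R M x)).symm.toLinearEquiv ≪≫ₗ
      Submodule.quotEquivOfEq _ _ hxy ≪≫ₗ Ideal.quotTorsionOfEquivSpanSingleton S N y
  exact ⟨e.toModuleIso⟩

theorem stmt_2_general {R S : Type u} [CommRing R] [CommRing S] [Algebra R S] (p : ℕ)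
    [ExpChar R p] (hR : ∀ (P : Ideal R) [P.IsPrime], IsDomain (Localization.AtPrime P))
    (M : Submonoid R) [IsLocalization M S] {u : S} (hu : IsUnit u) :
    Nonempty
      ((ModuleCat.extendScalars (frobenius R p)).obj (ModuleCat.of R ↥(Submodule.span R {u})) ≅
        ModuleCat.of R ↥(Submodule.span R {u ^ p})) := by
  apply nonempty_extendScalars_span_singleton_iso
  rw [torsionOf_eq_ker_algebraMap_of_isUnit hu, torsionOf_eq_ker_algebraMap_of_isUnit (hu.pow p),
    map_frobenius_ker_algebraMap_of_isDomain_localization p hR M S]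

/-- For a noetherian regular ring `R` of prime characteristic `p` and the Peskine–Szpiro
functor `F = R^{(1)} ⊗_R –` (extension of scalars along the Frobenius), for every `g ∈ R`
one has `F(R·(1/g)) ≅ R·(1/g^p)`, where `R·(1/g^n)` is the cyclic `R`-submodule of the
localization `R_g` generated by `1/g^n`. -/
theorem stmt_2 {R : Type} [CommRing R] (p : ℕ) [Fact p.Prime] [CharP R p]
    (hreg : IsRegularRingStmt R) (g : R) :
    Nonempty
      ((ModuleCat.extendScalars (frobenius R p)).obj
          (ModuleCat.of R
            ↥(Submodule.span R
              {IsLocalization.Away.invSelf (S := Localization.Away g) g})) ≅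
        ModuleCat.of R
          ↥(Submodule.span R
            {(IsLocalization.Away.invSelf (S := Localization.Away g) g) ^ p})) := by
  have := hreg.isRegularRing
  exact stmt_2_general p (fun P _ => isDomain_of_isRegularLocalRing _) (.powers g)
    (.of_mul_eq_one_right _ (IsLocalization.Away.mul_invSelf g))
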